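/- Define the block pattern W(n) as a list of Booleans by W(0)=[false], W(1)=[true], W(2)=[false,true], and for j ≥ 2, W(2j−1)=W(a*(j−1))++W(j) and W(2j)=W(j)++W(a(j)) (false representing a block A, true a block B). Then for every k ≥ 3, the list W(k) begins with false, ends with true, and exactly one of the following holds: (1) W(k) has no two consecutive entries equal to false and has two consecutive entries equal to true, or (2) W(k) has no two consecutive entries equal to true and has two consecutive entries equal to false. Equivalently, writing S_{A,B}(k) = A^{α_1}B^{β_1}⋯A^{α_n}B^{β_n}, either every α_i = 1 and some β_i > 1, or every β_i = 1 and some α_i > 1. -/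

import Mathlib

/-- Stern's diatomic sequence. -/
def stern : ℕ → ℕ
  | 0 => 0
  | 1 => 1
  | n + 2 =>
    if (n + 2) % 2 = 0 then stern ((n + 2) / 2)
    else stern ((n + 2) / 2) + stern ((n + 2) / 2 + 1)
decreasing_by all_goals omega

/-- OEIS A003602: a(1)=1, a(2n)=a(n), a(2n+1)=n+1. (a(0)=0 as junk value.) -/
def aseq : ℕ → ℕ
  | 0 => 0
  | 1 => 1
  | n + 2 =>
    if (n + 2) % 2 = 0 then aseq ((n + 2) / 2)
    else (n + 2) / 2 + 1
decreasing_by all_goals omega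

-- the modified sequence `a*`: zero at powers of two.
open Classical in
noncomputable def aStar (j : ℕ) : ℕ :=
  if ∃ k, j = 2 ^ k then 0 else aseq j

theorem aseq_le (n : ℕ) : aseq n ≤ n := by
  induction n using Nat.strong_induction_on with
  | _ n ih =>
    match n with
    | 0 => simp [aseq]
    | 1 => simp [aseq]
    | m + 2 =>
      rw [aseq]
      split
      · exact le_trans (ih ((m + 2) / 2) (by omega)) (by omega)
      · omega

theorem aStar_le (j : ℕ) : aStar j ≤ j := by
  unfold aStar
  split
  · omega
  · exact aseq_le j

/-- The Markov-type sequence `S_{A,B}(n)`. -/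
noncomputable def mseq {α : Type*} (A B : List α) : ℕ → List α
  | 0 => A
  | 1 => B
  | 2 => A ++ B
  | n + 3 =>
    if (n + 3) % 2 = 0 then
      mseq A B ((n + 3) / 2) ++ mseq A B (aseq ((n + 3) / 2))
    else
      mseq A B (aStar ((n + 4) / 2 - 1)) ++ mseq A B ((n + 4) / 2)
decreasing_by
  all_goals first
    | omega
    | exact lt_of_le_of_lt (aseq_le _) (by omega)
    | exact lt_of_le_of_lt (aStar_le _) (by omega)

/-- The block pattern `W(n)`: `false` represents a block `A`, `true` a block `B`. -/
noncomputable def wpat : ℕ → List Bool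
  | 0 => [false]
  | 1 => [true]
  | 2 => [false, true]
  | n + 3 =>
    if (n + 3) % 2 = 0 then
      wpat ((n + 3) / 2) ++ wpat (aseq ((n + 3) / 2))
    else
      wpat (aStar ((n + 4) / 2 - 1)) ++ wpat ((n + 4) / 2)
decreasing_by
  all_goals first
    | omega
    | exact lt_of_le_of_lt (aseq_le _) (by omega)
    | exact lt_of_le_of_lt (aStar_le _) (by omega)

theorem aseq_even (n : ℕ) (hn : 1 ≤ n) : aseq (2 * n) = aseq n := by
  obtain ⟨m, rfl⟩ : ∃ m, n = m + 1 := ⟨n - 1, by omega⟩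
  rw [show 2 * (m + 1) = 2 * m + 2 by ring, aseq, if_pos (by omega)]
  congr 1
  omega

theorem aseq_odd (n : ℕ) : aseq (2 * n + 1) = n + 1 := by
  match n with
  | 0 => simp [aseq]
  | m + 1 =>
    rw [show 2 * (m + 1) + 1 = (2 * m + 1) + 2 by ring, aseq, if_neg (by omega)]
    omega

theorem aStar_even (n : ℕ) (hn : 1 ≤ n) : aStar (2 * n) = aStar n := by
  unfold aStar
  rw [aseq_even n hn]
  have : (∃ k, 2 * n = 2 ^ k) ↔ ∃ k, n = 2 ^ k := by
    constructor
    · rintro ⟨k, hk⟩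
      cases k with
      | zero => simp at hk
      | succ k => exact ⟨k, by rw [pow_succ] at hk; omega⟩
    · rintro ⟨k, rfl⟩
      exact ⟨k + 1, by ring⟩
  by_cases h : ∃ k, n = 2 ^ k
  · rw [if_pos h, if_pos (this.2 h)]
  · rw [if_neg h, if_neg (fun g => h (this.1 g))]

theorem aStar_odd (n : ℕ) (hn : 1 ≤ n) : aStar (2 * n + 1) = n + 1 := by
  unfold aStar
  rw [aseq_odd, if_neg]
  rintro ⟨k, hk⟩
  cases k with
  | zero => simp at hk; omega
  | succ k => rw [pow_succ] at hk; omega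

theorem aStar_one : aStar 1 = 0 := by
  unfold aStar
  exact if_pos ⟨0, rfl⟩

theorem wpat_even (n : ℕ) (hn : 2 ≤ n) : wpat (2 * n) = wpat n ++ wpat (aseq n) := by
  obtain ⟨m, rfl⟩ : ∃ m, n = m + 2 := ⟨n - 2, by omega⟩
  rw [show 2 * (m + 2) = (2 * m + 1) + 3 by ring, wpat, if_pos (by omega),
    show (2 * m + 1 + 3) / 2 = m + 2 by omega]

theorem wpat_odd (n : ℕ) (hn : 1 ≤ n) :
    wpat (2 * n + 1) = wpat (aStar n) ++ wpat (n + 1) := by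
  obtain ⟨m, rfl⟩ : ∃ m, n = m + 1 := ⟨n - 1, by omega⟩
  rw [show 2 * (m + 1) + 1 = (2 * m) + 3 by ring, wpat, if_neg (by omega),
    show (2 * m + 4) / 2 = m + 2 by omega]
  rfl

/-- type of an index: `true` if blocks `true` are repeated. -/
def wtyp : ℕ → Bool
  | 0 => false
  | 1 => false
  | 2 => false
  | 3 => false
  | 4 => true
  | n + 5 => wtyp ((n + 6) / 2)
decreasing_by omega

theorem wtyp_even (n : ℕ) (hn : 3 ≤ n) : wtyp (2 * n) = wtyp n := by
  obtain ⟨m, rfl⟩ : ∃ m, n = m + 3 := ⟨n - 3, by omega⟩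
  rw [show 2 * (m + 3) = (2 * m + 1) + 5 by ring, wtyp]
  congr 1
  omega

theorem wtyp_odd (n : ℕ) (hn : 2 ≤ n) : wtyp (2 * n + 1) = wtyp (n + 1) := by
  obtain ⟨m, rfl⟩ : ∃ m, n = m + 2 := ⟨n - 2, by omega⟩
  rw [show 2 * (m + 2) + 1 = (2 * m) + 5 by ring, wtyp]
  congr 1
  omega

theorem aseq_compat (k : ℕ) (hk : 3 ≤ k) :
    aseq k = 2 ∨ (3 ≤ aseq k ∧ wtyp (aseq k) = wtyp k) ∨ (aseq k = 1 ∧ wtyp k = true) := by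
  induction k using Nat.strong_induction_on with
  | _ k ih =>
    obtain ⟨n, rfl | rfl⟩ := Nat.even_or_odd' k
    · rw [aseq_even n (by omega)]
      by_cases h : n = 2
      · subst h
        right; right
        simp [aseq, wtyp]
      · rw [wtyp_even n (by omega)]
        exact ih n (by omega) (by omega)
    · rw [aseq_odd]
      by_cases h : n = 1
      · left; omega
      · rw [wtyp_odd n (by omega)]
        right; left
        exact ⟨by omega, rfl⟩

theorem aStar_compat (k : ℕ) (hk : 2 ≤ k) :
    aStar k = 2 ∨ (3 ≤ aStar k ∧ wtyp (aStar k) = wtyp (k + 1)) ∨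
      (aStar k = 0 ∧ wtyp (k + 1) = false) := by
  induction k using Nat.strong_induction_on with
  | _ k ih =>
    obtain ⟨n, rfl | rfl⟩ := Nat.even_or_odd' k
    · rw [aStar_even n (by omega)]
      by_cases h : n = 1
      · subst h
        right; right
        simp [aStar_one, wtyp]
      · rw [wtyp_odd n (by omega)]
        exact ih n (by omega) (by omega)
    · rw [aStar_odd n (by omega)]
      by_cases h : n = 1
      · left; omega
      · rw [show 2 * n + 1 + 1 = 2 * (n + 1) by ring, wtyp_even (n + 1) (by omega)]
        right; left
        exact ⟨by omega, rfl⟩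

/-- Starts with `false`, ends with `true`, no two consecutive `!c`. -/
def WeakG (c : Bool) (l : List Bool) : Prop :=
  l.head? = some false ∧ l.getLast? = some true ∧
    l.IsChain (fun x y => ¬ (x = !c ∧ y = !c))

/-- Weakly good, with two consecutive `c`. -/
def GoodW (c : Bool) (l : List Bool) : Prop :=
  WeakG c l ∧ ∃ l₁ l₂, l = l₁ ++ [c, c] ++ l₂

theorem WeakG.append {c : Bool} {u v : List Bool} (hu : WeakG c u) (hv : WeakG c v) :
    WeakG c (u ++ v) := by
  obtain ⟨h1, h2, h3⟩ := hu
  obtain ⟨g1, g2, g3⟩ := hv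
  refine ⟨by simp [h1], by simp [g2], ?_⟩
  rw [List.isChain_append]
  refine ⟨h3, g3, ?_⟩
  rw [h2, g1]
  cases c <;> simp

theorem GoodW.append {c : Bool} {u v : List Bool} (hu : GoodW c u) (hv : WeakG c v) :
    GoodW c (u ++ v) := by
  obtain ⟨h, l₁, l₂, e⟩ := hu
  exact ⟨h.append hv, l₁, l₂ ++ v, by simp [e]⟩

theorem GoodW.append' {c : Bool} {u v : List Bool} (hu : WeakG c u) (hv : GoodW c v) :
    GoodW c (u ++ v) := by
  obtain ⟨h, l₁, l₂, e⟩ := hv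
  exact ⟨hu.append h, u ++ l₁, l₂, by simp [e]⟩

theorem weakG_two (c : Bool) : WeakG c [false, true] := by
  cases c <;> simp [WeakG]

theorem GoodW.snoc {v : List Bool} (hv : GoodW true v) : GoodW true (v ++ [true]) := by
  obtain ⟨⟨h1, h2, h3⟩, l₁, l₂, e⟩ := hv
  refine ⟨⟨by simp [h1], by simp, ?_⟩, l₁, l₂ ++ [true], by simp [e]⟩
  rw [List.isChain_append]
  exact ⟨h3, by simp, by simp⟩

theorem GoodW.cons {v : List Bool} (hv : GoodW false v) : GoodW false ([false] ++ v) := by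
  obtain ⟨⟨h1, h2, h3⟩, l₁, l₂, e⟩ := hv
  refine ⟨⟨by simp, by rw [List.getLast?_append, h2]; rfl, ?_⟩, false :: l₁, l₂, by simp [e]⟩
  rw [List.isChain_append]
  exact ⟨by simp, h3, by simp⟩

theorem wpat_zero : wpat 0 = [false] := by rw [wpat]

theorem wpat_one : wpat 1 = [true] := by rw [wpat]

theorem wpat_two : wpat 2 = [false, true] := by rw [wpat]

theorem wpat_good (k : ℕ) (hk : 3 ≤ k) : GoodW (wtyp k) (wpat k) := by
  induction k using Nat.strong_induction_on with
  | _ k ih =>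
    obtain ⟨n, rfl | rfl⟩ := Nat.even_or_odd' k
    · rw [wpat_even n (by omega)]
      by_cases h : n = 2
      · subst h
        have : aseq 2 = 1 := by simp [aseq]
        rw [this, wpat_one, wpat_two]
        have : wtyp (2 * 2) = true := by simp [wtyp]
        rw [this]
        exact ⟨by simp [WeakG], [false], [], by simp⟩
      · rw [wtyp_even n (by omega)]
        have hn := ih n (by omega) (by omega)
        rcases aseq_compat n (by omega) with h | ⟨h, e⟩ | ⟨h, e⟩
        · rw [h, wpat_two]
          exact hn.append (weakG_two _)
        · have := ih (aseq n) (by have := aseq_le n; omega) h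
          rw [e] at this
          exact hn.append this.1
        · rw [h, wpat_one]
          rw [e] at hn ⊢
          exact hn.snoc
    · rw [wpat_odd n (by omega)]
      by_cases h : n = 1
      · subst h
        rw [aStar_one, wpat_zero, wpat_two]
        have : wtyp (2 * 1 + 1) = false := by simp [wtyp]
        rw [this]
        exact ⟨by simp [WeakG], [], [true], by simp⟩
      · rw [wtyp_odd n (by omega)]
        have hn := ih (n + 1) (by omega) (by omega)
        rcases aStar_compat n (by omega) with h | ⟨h, e⟩ | ⟨h, e⟩
        · rw [h, wpat_two]
          exact GoodW.append' (weakG_two _) hn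
        · have := ih (aStar n) (by have := aStar_le n; omega) h
          rw [e] at this
          exact GoodW.append' this.1 hn
        · rw [h, wpat_zero]
          rw [e] at hn ⊢
          exact hn.cons

theorem WeakG.not_pair {c : Bool} {l : List Bool} (h : WeakG c l) :
    ¬ ∃ l₁ l₂, l = l₁ ++ [!c, !c] ++ l₂ := by
  rintro ⟨l₁, l₂, rfl⟩
  have h3 := h.2.2
  rw [List.isChain_append, List.isChain_append] at h3
  have := h3.1.2.1
  simp at this

/-- for every `k ≥ 3`, the block pattern `W(k)` begins with `false`, ends
with `true`, and exactly one of the following holds: (1) it has no two consecutive `false`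
entries and has two consecutive `true` entries, or (2) it has no two consecutive `true`
entries and has two consecutive `false` entries. -/
theorem stmt16 (k : ℕ) (hk : 3 ≤ k) :
    (wpat k).head? = some false ∧ (wpat k).getLast? = some true ∧
      Xor'
        ((¬ ∃ l₁ l₂, wpat k = l₁ ++ [false, false] ++ l₂) ∧
          ∃ l₁ l₂, wpat k = l₁ ++ [true, true] ++ l₂)
        ((¬ ∃ l₁ l₂, wpat k = l₁ ++ [true, true] ++ l₂) ∧
          ∃ l₁ l₂, wpat k = l₁ ++ [false, false] ++ l₂) := by
  have h := wpat_good k hk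
  refine ⟨h.1.1, h.1.2.1, ?_⟩
  have h1 := h.1.not_pair
  have h2 := h.2
  cases hc : wtyp k
  · rw [hc] at h1 h2
    exact Or.inr ⟨⟨h1, h2⟩, fun g => h1 g.2⟩
  · rw [hc] at h1 h2
    exact Or.inl ⟨⟨h1, h2⟩, fun g => h1 g.2⟩
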